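/- arXiv:1703.00252 — 4 statements merged into one kernel-verified Lean document; each statement's English description precedes it below -/
import Mathlib

section
/- Let Ω ⊂ ℝ^N be a bounded open set, Ω_J = Ω + supp J, assume J satisfies hypothesis (J) and G satisfies hypothesis (G), and let λ ≠ 0 be a real number. Then the unique regular solution u of the homogeneous Dirichlet problem ∂u/∂t(x,t) = ∫_{Ω_J} J(x−y)(u(y,t)−u(x,t)) G(x, u(y,t)−u(x,t)) dy for x ∈ Ω̄, t > 0, with u(x,t) = 0 for x ∈ Ω_J \ Ω̄, t > 0, and constant initial datum u(x,0) = λ for x ∈ Ω, satisfies lim_{t→∞} u(·,t) = 0 uniformly on Ω̄. -/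
open MeasureTheory Set Filter Topology Pointwise

noncomputable section

/-- Hypothesis (J): nonnegative, radially symmetric, continuous, compactly supported,
integral one, finite second moments. -/
def HypJ (N : ℕ) (J : (Fin N → ℝ) → ℝ) : Prop :=
  (∀ z, 0 ≤ J z) ∧
  (∀ z w : Fin N → ℝ, (∑ i, z i ^ 2) = (∑ i, w i ^ 2) → J z = J w) ∧
  Continuous J ∧ HasCompactSupport J ∧
  (∫ z, J z) = 1 ∧
  ∀ i : Fin N, Integrable fun z : Fin N → ℝ => J z * z i ^ 2

/-- Hypothesis (G): Carathéodory function with the strong monotonicity condition. -/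
def HypG (N : ℕ) (G : (Fin N → ℝ) → ℝ → ℝ) : Prop :=
  (∀ s : ℝ, Measurable fun x : Fin N → ℝ => G x s) ∧
  (∀ᵐ x : Fin N → ℝ, Continuous fun s : ℝ => G x s) ∧
  ∃ α₁ α₂ : ℝ, 0 < α₁ ∧ α₁ ≤ α₂ ∧
    ∀ᵐ x : Fin N → ℝ, ∀ s σ : ℝ, σ < s →
      α₁ * (s - σ) ≤ G x s * s - G x σ * σ ∧ G x s * s - G x σ * σ ≤ α₂ * (s - σ)

/-- A regular solution, on the whole time half-line, of the homogeneous nonlocal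
Dirichlet problem with initial datum `u₀`: a continuous curve in `C(Ω̄)` satisfying the
integral equation for every `x ∈ Ω̄` and `t > 0`, vanishing on `Ω_J \ Ω̄`, and attaining
the initial datum uniformly on `Ω̄`. -/
def RegularSolutionHom (N : ℕ) (J : (Fin N → ℝ) → ℝ) (G : (Fin N → ℝ) → ℝ → ℝ)
    (Ω : Set (Fin N → ℝ)) (u₀ : (Fin N → ℝ) → ℝ) (u : (Fin N → ℝ) → ℝ → ℝ) : Prop :=
  ContinuousOn (fun p : (Fin N → ℝ) × ℝ => u p.1 p.2) (closure Ω ×ˢ Ici (0 : ℝ)) ∧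
  (∀ x ∈ closure Ω, ∀ t ∈ Ioi (0 : ℝ),
    u x t = (∫ τ in Ioc (0 : ℝ) t, ∫ y in Ω + tsupport J,
      J (x - y) * (u y τ - u x τ) * G x (u y τ - u x τ)) + u₀ x) ∧
  (∀ y ∈ (Ω + tsupport J) \ closure Ω, ∀ t ∈ Ioi (0 : ℝ), u y t = 0) ∧
  TendstoUniformlyOn (fun t x => u x t) u₀ (𝓝[Ioi (0 : ℝ)] 0) (closure Ω)

/-!
Hypothesis (G) confines the diffusivity, `a ≤ G x s ≤ b` for `s ≠ 0`, so `u` and `-u` are both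
subsolutions of the nonlocal equation with the extremal flux `s ↦ max (a s) (b s)`, which is
monotone and positively homogeneous. For a linear form `ℓ` and large `k` and `B`, the function
`φ = B - exp (k ℓ)` is positive on `Ω̄` and wherever `J` reaches from there, and the operator `L`
with the extremal flux satisfies `L φ < -δ φ` on `Ω̄`: in
`exp (-k ℓ x) * L φ x = ∫ J z * max (a s) (b s) dz`, `s = 1 - exp (-k ℓ z)`, the half space `ℓ < 0`
eventually dominates. A subsolution starting below `c φ` can therefore never touch
`c exp (-δ t) φ` for the first time, so `|u|` decays exponentially. Since `G` is controlled only
for almost every `x`, the differential inequality is extended from a dense set of points by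
continuity.
-/

section ExtremalFlux

/-- The largest flux `m * s` with diffusivity `m` in `[a, b]`: the one-dimensional analogue of
Pucci's maximal operator. -/
def extremalFlux (a b s : ℝ) : ℝ := max (a * s) (b * s)

variable {a b : ℝ}

lemma continuous_extremalFlux : Continuous (extremalFlux a b) := by
  unfold extremalFlux
  fun_prop

lemma monotone_extremalFlux (ha : 0 ≤ a) (hb : 0 ≤ b) : Monotone (extremalFlux a b) :=
  fun _ _ h => max_le_max (mul_le_mul_of_nonneg_left h ha) (mul_le_mul_of_nonneg_left h hb)

lemma extremalFlux_mul_of_nonneg {c : ℝ} (hc : 0 ≤ c) (s : ℝ) :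
    extremalFlux a b (c * s) = c * extremalFlux a b s := by
  simp only [extremalFlux, mul_left_comm _ c s, mul_max_of_nonneg _ _ hc]

lemma mul_le_extremalFlux {m s : ℝ} (h : s ≠ 0 → a ≤ m ∧ m ≤ b) :
    s * m ≤ extremalFlux a b s := by
  rcases lt_trichotomy s 0 with hs | rfl | hs
  · exact le_max_of_le_left (by nlinarith [(h hs.ne).1])
  · simp [extremalFlux]
  · exact le_max_of_le_right (by nlinarith [(h hs.ne').2])

lemma extremalFlux_one_sub_exp_neg_le (ha : 0 ≤ a) (hab : a ≤ b) (s : ℝ) :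
    extremalFlux a b (1 - Real.exp (-s)) ≤ b + a * min s 0 := by
  have hexp : 1 - Real.exp (-s) ≤ s := by linarith [Real.add_one_le_exp (-s)]
  have hpos : 0 < Real.exp (-s) := Real.exp_pos _
  rcases le_total s 0 with hs | hs
  · rw [min_eq_left hs]
    exact max_le (by nlinarith) (by nlinarith)
  · rw [min_eq_right hs]
    exact max_le (by nlinarith) (by nlinarith)

end ExtremalFlux

section Touching

lemma continuousOn_intervalIntegral_of_prod {X : Type*} [TopologicalSpace X]
    [FirstCountableTopology X] {K : Set X} {F : ℝ × X → ℝ} {s t : ℝ} (hst : s ≤ t)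
    (hK : IsCompact K) (hF : ContinuousOn F (Icc s t ×ˢ K)) :
    ContinuousOn (fun x => ∫ τ in s..t, F (τ, x)) K := by
  obtain ⟨C, hC⟩ := (isCompact_Icc.prod hK).exists_bound_of_continuousOn hF
  have hmem : ∀ {τ}, τ ∈ uIoc s t → τ ∈ Icc s t := fun hτ =>
    Ioc_subset_Icc_self (uIoc_of_le hst ▸ hτ)
  intro x hx
  refine intervalIntegral.continuousWithinAt_of_dominated_interval (bound := fun _ => C)
    ?_ ?_ (by simp) ?_
  · filter_upwards [self_mem_nhdsWithin] with z hz
    exact ((hF.comp (f := fun τ => (τ, z)) (by fun_prop) fun τ hτ => ⟨hτ, hz⟩).mono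
      fun τ => hmem).aestronglyMeasurable measurableSet_uIoc
  · filter_upwards [self_mem_nhdsWithin] with z hz
    exact .of_forall fun τ hτ => hC _ ⟨hmem hτ, hz⟩
  · exact .of_forall fun τ hτ => hF.comp (f := fun z => (τ, z)) (by fun_prop)
      (fun z hz => ⟨hmem hτ, hz⟩) x hx

lemma exists_sub_lt_sub_of_sub_le_integral {f F ψ : ℝ → ℝ} {a t ψ' : ℝ} (hat : a < t)
    (hF : ContinuousOn F (Icc a t)) (hψ : HasDerivAt ψ ψ' t) (hlt : F t < ψ')
    (hf : ∀ s ∈ Ico a t, f t - f s ≤ ∫ τ in s..t, F τ) :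
    ∃ s ∈ Ico a t, f t - ψ t < f s - ψ s := by
  obtain ⟨c, hFc, hcψ⟩ := exists_between hlt
  have hslope : ∀ᶠ s in 𝓝[<] t, c < slope ψ t s :=
    ((hasDerivAt_iff_tendsto_slope.1 hψ).mono_left
      (nhdsWithin_mono _ fun _ hs => ne_of_lt hs)).eventually_const_lt hcψ
  have hFlt : ∀ᶠ s in 𝓝[<] t, F s < c :=
    nhdsWithin_le_of_mem (Icc_mem_nhdsLT hat)
      ((hF t (right_mem_Icc.2 hat.le)).eventually_lt_const hFc)
  obtain ⟨l, hlt : l < t, hl⟩ :=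
    mem_nhdsLT_iff_exists_Ioo_subset.1 ((hslope.and hFlt).and (Ico_mem_nhdsLT hat))
  obtain ⟨s, hls, hst⟩ := exists_between hlt
  obtain ⟨⟨hs_slope, -⟩, hs⟩ := hl ⟨hls, hst⟩
  have hint : ∫ τ in s..t, F τ ≤ c * (t - s) := calc
    ∫ τ in s..t, F τ ≤ ∫ _ in s..t, c :=
      intervalIntegral.integral_mono_on_of_le_Ioo hst.le
        ((hF.mono (Icc_subset_Icc_left hs.1)).intervalIntegrable_of_Icc hst.le) (by simp)
        fun τ hτ => (hl ⟨hls.trans hτ.1, hτ.2⟩).1.2.le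
    _ = c * (t - s) := by simp [mul_comm]
  have hψlt : c * (t - s) < ψ t - ψ s := by
    rwa [slope_comm, slope_def_field, lt_div_iff₀ (sub_pos.2 hst)] at hs_slope
  exact ⟨s, hs, by linarith [hf s hs]⟩

lemma neg_of_forall_touching {X : Type*} [TopologicalSpace X] [T2Space X] {K : Set X}
    (hK : IsCompact K) {w : ℝ → X → ℝ}
    (hw : ContinuousOn (fun p : ℝ × X => w p.1 p.2) (Ici 0 ×ˢ K)) (h0 : ∀ x ∈ K, w 0 x < 0)
    (htouch : ∀ t, 0 < t → ∀ x ∈ K, (∀ y ∈ K, w t y ≤ 0) → w t x = 0 → ∃ s ∈ Ico 0 t, 0 ≤ w s x) :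
    ∀ t, 0 ≤ t → ∀ x ∈ K, w t x < 0 := by
  by_contra! ⟨T, hT, x₁, hx₁, hT_nonneg⟩
  have hcompact : IsCompact (Icc 0 T ×ˢ K) := isCompact_Icc.prod hK
  have hcompact_nonneg : IsCompact ((Icc 0 T ×ˢ K) ∩ (fun p : ℝ × X => w p.1 p.2) ⁻¹' Ici 0) :=
    hcompact.of_isClosed_subset ((hw.mono (prod_mono_left Icc_subset_Ici_self)
      ).preimage_isClosed_of_isClosed hcompact.isClosed isClosed_Ici) inter_subset_left
  obtain ⟨⟨t, x⟩, ⟨⟨ht, hx⟩, hwx : 0 ≤ w t x⟩, hfirst⟩ := hcompact_nonneg.exists_isMinOn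
    ⟨(T, x₁), ⟨⟨hT, le_rfl⟩, hx₁⟩, hT_nonneg⟩ continuous_fst.continuousOn
  have hbefore : ∀ y ∈ K, ∀ s ∈ Ico 0 t, w s y < 0 := fun y hy s hs => by
    by_contra! hws
    exact hs.2.not_ge (hfirst (a := (s, y)) ⟨⟨⟨hs.1, hs.2.le.trans ht.2⟩, hy⟩, hws⟩)
  have ht_pos : 0 < t := ht.1.lt_of_ne fun h : 0 = t => by
    rw [← h] at hwx
    exact (h0 x hx).not_ge hwx
  have hat : ∀ y ∈ K, w t y ≤ 0 := fun y hy => by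
    have hcont : ContinuousWithinAt (fun s => w s y) (Ico 0 t) t :=
      (hw.comp (f := fun s => (s, y)) (by fun_prop) fun s hs => ⟨hs, hy⟩).continuousWithinAt
        ht.1 |>.mono Ico_subset_Ici_self
    refine hcont.closure_le ?_ continuousWithinAt_const fun s hs => (hbefore y hy s hs).le
    rw [closure_Ico ht_pos.ne]
    exact right_mem_Icc.2 ht.1
  obtain ⟨s, hs, hws⟩ := htouch t ht_pos x hx hat ((hat x hx).antisymm hwx)
  exact (hbefore x hx s hs).not_ge hws

end Touching

section NonlocalOperator

variable {E : Type*} [NormedAddCommGroup E] {J : E → ℝ} {g : ℝ → ℝ} {K : Set E} {v : ℝ → E → ℝ}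

/-- A curve `t ↦ v t` in `C(K)`, each `v t` being extended by zero to the whole space. -/
structure IsDirichletCurve (K : Set E) (v : ℝ → E → ℝ) : Prop where
  continuousOn : ContinuousOn (fun p : ℝ × E => v p.1 p.2) (Ici 0 ×ˢ K)
  eq_zero : ∀ t, ∀ x ∉ K, v t x = 0

namespace IsDirichletCurve

lemma continuousOn_apply (hv : IsDirichletCurve K v) {t : ℝ} (ht : 0 ≤ t) : ContinuousOn (v t) K :=
  hv.continuousOn.comp (f := fun x => (t, x)) (by fun_prop) fun _ hx => ⟨ht, hx⟩

lemma exists_norm_flux_le (hv : IsDirichletCurve K v) (hK : IsCompact K) (hg : Continuous g)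
    (T : ℝ) : ∃ C, ∀ t ∈ Icc 0 T, ∀ x y, ‖g (v t y - v t x)‖ ≤ C := by
  obtain ⟨M, hM⟩ := (isCompact_Icc.prod hK).exists_bound_of_continuousOn
    (hv.continuousOn.mono (prod_mono_left (Icc_subset_Ici_self : Icc 0 T ⊆ Ici 0)))
  have hbound : ∀ t ∈ Icc 0 T, ∀ y, |v t y| ≤ |M| := fun t ht y => by
    by_cases hy : y ∈ K
    · exact (hM (t, y) ⟨ht, hy⟩).trans (le_abs_self M)
    · simp [hv.eq_zero t y hy]
  obtain ⟨C, hC⟩ := (isCompact_Icc (a := -(2 * |M|)) (b := 2 * |M|)).exists_bound_of_continuousOn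
    hg.continuousOn
  refine ⟨C, fun t ht x y => hC _ (abs_le.1 ?_)⟩
  linarith [abs_sub (v t y) (v t x), hbound t ht x, hbound t ht y]

end IsDirichletCurve

variable [MeasurableSpace E] {μ : Measure E}

/-- The nonlocal diffusion operator `x ↦ ∫ J(x - y) g(v(y) - v(x)) dy` with kernel `J` and
flux `g`. -/
def nonlocalOp (μ : Measure E) (J : E → ℝ) (g : ℝ → ℝ) (v : E → ℝ) (x : E) : ℝ :=
  ∫ y, J (x - y) * g (v y - v x) ∂μ

/-- A subsolution, in time-integrated form, of `∂v/∂t = nonlocalOp μ J g v` on `K` with zero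
exterior values. -/
structure IsSubsolution (μ : Measure E) (J : E → ℝ) (g : ℝ → ℝ) (K : Set E) (v : ℝ → E → ℝ) : Prop
    extends IsDirichletCurve K v where
  sub_le_integral : ∀ x ∈ K, ∀ s t, 0 ≤ s → s ≤ t →
    v t x - v s x ≤ ∫ τ in s..t, nonlocalOp μ J g (v τ) x

/-- A strict supersolution of the eigenvalue problem `nonlocalOp μ J g φ = -δ φ` on `K`, nonnegative
wherever the operator sees it from `K`. -/
structure IsBarrier (μ : Measure E) (J : E → ℝ) (g : ℝ → ℝ) (K : Set E) (δ : ℝ) (φ : E → ℝ) :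
    Prop where
  continuous : Continuous φ
  nonneg : ∀ x ∈ K, ∀ y, J (x - y) ≠ 0 → 0 ≤ φ y
  nonlocalOp_lt : ∀ x ∈ K, nonlocalOp μ J g φ x < -(δ * φ x)

lemma nonlocalOp_mono {g₁ g₂ : ℝ → ℝ} {w : E → ℝ} {x : E} (hJ : ∀ z, 0 ≤ J z)
    (hg : ∀ s, g₁ s ≤ g₂ s) (h₁ : Integrable (fun y => J (x - y) * g₁ (w y - w x)) μ)
    (h₂ : Integrable (fun y => J (x - y) * g₂ (w y - w x)) μ) :
    nonlocalOp μ J g₁ w x ≤ nonlocalOp μ J g₂ w x :=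
  integral_mono h₁ h₂ fun _ => mul_le_mul_of_nonneg_left (hg _) (hJ _)

lemma nonlocalOp_le_of_touching {w₁ w₂ : E → ℝ} {x : E} (hJ : ∀ z, 0 ≤ J z) (hg : Monotone g)
    (h₁ : Integrable (fun y => J (x - y) * g (w₁ y - w₁ x)) μ)
    (h₂ : Integrable (fun y => J (x - y) * g (w₂ y - w₂ x)) μ)
    (hle : ∀ y, J (x - y) ≠ 0 → w₁ y ≤ w₂ y) (heq : w₁ x = w₂ x) :
    nonlocalOp μ J g w₁ x ≤ nonlocalOp μ J g w₂ x := by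
  refine integral_mono h₁ h₂ fun y => ?_
  by_cases hy : J (x - y) = 0
  · simp [hy]
  · exact mul_le_mul_of_nonneg_left (hg (by rw [heq]; gcongr; exact hle y hy)) (hJ _)

lemma nonlocalOp_const_mul {c : ℝ} (hg : ∀ s, g (c * s) = c * g s) (w : E → ℝ) (x : E) :
    nonlocalOp μ J g (fun y => c * w y) x = c * nonlocalOp μ J g w x := by
  simp only [nonlocalOp, ← mul_sub, hg, mul_left_comm _ c, integral_const_mul]

lemma integrable_comp_sub_mul [BorelSpace E] [IsFiniteMeasureOnCompacts μ] {f : E → ℝ}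
    (hJ : Continuous J) (hJ_supp : HasCompactSupport J) (hf : Continuous f) (x : E) :
    Integrable (fun y => J (x - y) * f y) μ :=
  Continuous.integrable_of_hasCompactSupport (by fun_prop)
    (hJ_supp.comp_homeomorph (Homeomorph.subLeft x)).mul_right

namespace IsDirichletCurve

variable [BorelSpace E]

lemma aestronglyMeasurable (hv : IsDirichletCurve K v) (hK : IsCompact K) {t : ℝ} (ht : 0 ≤ t) :
    AEStronglyMeasurable (v t) μ := by
  rw [← indicator_eq_self.2 fun x hx => not_imp_comm.1 (hv.eq_zero t x) hx,
    aestronglyMeasurable_indicator_iff hK.measurableSet]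
  exact (hv.continuousOn_apply ht).aestronglyMeasurable_of_isCompact hK hK.measurableSet

variable [IsFiniteMeasureOnCompacts μ]

lemma integrable_nonlocalOp (hv : IsDirichletCurve K v) (hK : IsCompact K) (hJ : Continuous J)
    (hJ_supp : HasCompactSupport J) (hg : Continuous g) {t : ℝ} (ht : 0 ≤ t) (x : E) :
    Integrable (fun y => J (x - y) * g (v t y - v t x)) μ := by
  obtain ⟨C, hC⟩ := hv.exists_norm_flux_le hK hg t
  refine Integrable.mul_bdd (c := C) ?_ ?_ (.of_forall (hC t ⟨ht, le_rfl⟩ x))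
  · exact Continuous.integrable_of_hasCompactSupport (by fun_prop)
      (hJ_supp.comp_homeomorph (Homeomorph.subLeft x))
  · exact hg.comp_aestronglyMeasurable
      ((hv.aestronglyMeasurable hK ht).sub aestronglyMeasurable_const)

lemma continuousOn_nonlocalOp (hv : IsDirichletCurve K v) (hK : IsCompact K) (hJ : Continuous J)
    (hJ_supp : HasCompactSupport J) (hg : Continuous g) (T : ℝ) :
    ContinuousOn (fun p : ℝ × E => nonlocalOp μ J g (v p.1) p.2) (Icc 0 T ×ˢ K) := by
  obtain ⟨CJ, hCJ⟩ := hJ.bounded_above_of_compact_support hJ_supp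
  obtain ⟨C, hC⟩ := hv.exists_norm_flux_le hK hg T
  have hS : IsCompact (K - tsupport J) := by
    simpa only [sub_eq_add_neg] using hK.add hJ_supp.isCompact.neg
  have hv' := hv.continuousOn.mono (prod_mono_left (Icc_subset_Ici_self : Icc 0 T ⊆ Ici 0))
  intro p hp
  refine continuousWithinAt_of_dominated
    (bound := (K - tsupport J).indicator fun _ => CJ * C) ?_ ?_ ?_ ?_
  · filter_upwards [self_mem_nhdsWithin] with q hq
    exact (hv.integrable_nonlocalOp hK hJ hJ_supp hg hq.1.1 q.2).aestronglyMeasurable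
  · filter_upwards [self_mem_nhdsWithin] with q hq
    refine .of_forall fun y => ?_
    by_cases hy : y ∈ K - tsupport J
    · rw [indicator_of_mem hy, norm_mul]
      exact mul_le_mul (hCJ _) (hC q.1 hq.1 q.2 y) (norm_nonneg _) ((norm_nonneg _).trans (hCJ 0))
    · have hJ_zero : J (q.2 - y) = 0 := image_eq_zero_of_notMem_tsupport fun hz =>
        hy ⟨q.2, hq.2, q.2 - y, hz, sub_sub_cancel _ _⟩
      simp [hJ_zero, hy]
  · exact (integrable_indicator_iff hS.measurableSet).2
      (integrableOn_const hS.measure_lt_top.ne)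
  · refine .of_forall fun y => ?_
    have hvy : ContinuousOn (fun q : ℝ × E => v q.1 y) (Icc 0 T ×ˢ K) := by
      by_cases hy : y ∈ K
      · exact hv.continuousOn.comp (f := fun q : ℝ × E => (q.1, y)) (by fun_prop)
          fun q hq => ⟨hq.1.1, hy⟩
      · simpa only [hv.eq_zero _ y hy] using continuousOn_const
    exact ((hJ.comp (by fun_prop : Continuous fun q : ℝ × E => q.2 - y)).continuousOn.mul
      (hg.comp_continuousOn (hvy.sub hv'))) p hp

lemma continuousOn_nonlocalOp_time (hv : IsDirichletCurve K v) (hK : IsCompact K)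
    (hJ : Continuous J) (hJ_supp : HasCompactSupport J) (hg : Continuous g) {x : E} (hx : x ∈ K)
    (T : ℝ) : ContinuousOn (fun τ => nonlocalOp μ J g (v τ) x) (Icc 0 T) :=
  (hv.continuousOn_nonlocalOp hK hJ hJ_supp hg T).comp (f := fun τ => (τ, x)) (by fun_prop)
    fun _ hτ => ⟨hτ, hx⟩

end IsDirichletCurve

variable [BorelSpace E] [IsFiniteMeasureOnCompacts μ]

lemma IsSubsolution.of_dense {D : Set E} (hv : IsDirichletCurve K v) (hK : IsCompact K)
    (hJ : Continuous J) (hJ_supp : HasCompactSupport J) (hg : Continuous g) (hDK : D ⊆ K)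
    (hKD : K ⊆ closure D)
    (hD : ∀ x ∈ D, ∀ s t, 0 ≤ s → s ≤ t →
      v t x - v s x ≤ ∫ τ in s..t, nonlocalOp μ J g (v τ) x) :
    IsSubsolution μ J g K v where
  toIsDirichletCurve := hv
  sub_le_integral x hx s t hs hst := by
    have hint := continuousOn_intervalIntegral_of_prod hst hK
      ((hv.continuousOn_nonlocalOp (μ := μ) hK hJ hJ_supp hg t).mono
        (prod_mono_left (Icc_subset_Icc_left hs)))
    exact ContinuousWithinAt.closure_le (hKD hx)
      (((hv.continuousOn_apply (hs.trans hst)).sub (hv.continuousOn_apply hs) x hx).mono hDK)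
      ((hint x hx).mono hDK) fun y hy => hD y hy s t hs hst

theorem IsSubsolution.lt_barrier {δ c : ℝ} {φ : E → ℝ} (hv : IsSubsolution μ J g K v)
    (hφ : IsBarrier μ J g K δ φ) (hK : IsCompact K) (hJ_nonneg : ∀ z, 0 ≤ J z) (hJ : Continuous J)
    (hJ_supp : HasCompactSupport J) (hg : Continuous g) (hg_mono : Monotone g)
    (hg_hom : ∀ c s, 0 ≤ c → g (c * s) = c * g s) (hc : 0 < c) (h0 : ∀ x ∈ K, v 0 x < c * φ x) :
    ∀ t, 0 ≤ t → ∀ x ∈ K, v t x < c * Real.exp (-(δ * t)) * φ x := by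
  have hφ_cont := hφ.continuous
  set w : ℝ → E → ℝ := fun t x => v t x - c * Real.exp (-(δ * t)) * φ x with hw
  have hw_cont : ContinuousOn (fun p : ℝ × E => w p.1 p.2) (Ici 0 ×ˢ K) :=
    hv.continuousOn.sub (by fun_prop)
  suffices ∀ t, 0 ≤ t → ∀ x ∈ K, w t x < 0 from fun t ht x hx => sub_neg.1 (this t ht x hx)
  refine neg_of_forall_touching hK hw_cont (fun x hx => by simpa [hw] using h0 x hx)
    fun t ht x hx hle heq => ?_
  set k := c * Real.exp (-(δ * t)) with hk
  have hk_pos : 0 < k := by positivity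
  have hbelow : ∀ y, J (x - y) ≠ 0 → v t y ≤ k * φ y := fun y hy => by
    by_cases hyK : y ∈ K
    · exact sub_nonpos.1 (hle y hyK)
    · rw [hv.eq_zero t y hyK]
      exact mul_nonneg hk_pos.le (hφ.nonneg x hx y hy)
  have hop : nonlocalOp μ J g (v t) x < k * -(δ * φ x) := calc
    nonlocalOp μ J g (v t) x ≤ nonlocalOp μ J g (fun y => k * φ y) x :=
      nonlocalOp_le_of_touching hJ_nonneg hg_mono
        (hv.integrable_nonlocalOp hK hJ hJ_supp hg ht.le x)
        (integrable_comp_sub_mul hJ hJ_supp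
          (by fun_prop : Continuous fun y => g (k * φ y - k * φ x)) x)
        hbelow (sub_eq_zero.1 heq)
    _ = k * nonlocalOp μ J g φ x := nonlocalOp_const_mul (fun s => hg_hom k s hk_pos.le) φ x
    _ < k * -(δ * φ x) := mul_lt_mul_of_pos_left (hφ.nonlocalOp_lt x hx) hk_pos
  have hderiv : HasDerivAt (fun τ => c * Real.exp (-(δ * τ)) * φ x) (k * -(δ * φ x)) t := by
    refine (((hasDerivAt_id' t).const_mul δ).fun_neg.exp.const_mul c).mul_const (φ x)
      |>.congr_deriv ?_
    rw [hk]
    ring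
  obtain ⟨s, hs, hlt⟩ := exists_sub_lt_sub_of_sub_le_integral (f := fun τ => v τ x) ht
    (hv.continuousOn_nonlocalOp_time hK hJ hJ_supp hg hx t) hderiv hop
    fun s hs => hv.sub_le_integral x hx s t hs.1 hs.2.le
  exact ⟨s, hs, heq.symm.trans_le hlt.le⟩

end NonlocalOperator

section Barrier

variable {E : Type*} [NormedAddCommGroup E] [NormedSpace ℝ E] {J : E → ℝ} {a b : ℝ}

lemma exists_ne_zero_and_neg (hJ_even : J.Even) (hJ : Continuous J) (hJ_ne : J ≠ 0)
    {ℓ : E →L[ℝ] ℝ} (hℓ : ℓ ≠ 0) : ∃ z, J z ≠ 0 ∧ ℓ z < 0 := by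
  have hopen : IsOpen (ℓ '' Function.support J) :=
    ℓ.isOpenMap_of_ne_zero hℓ _ hJ.isOpen_support
  obtain ⟨_, ⟨z, hz, rfl⟩, hℓz⟩ := (dense_compl_singleton (0 : ℝ)).inter_open_nonempty _ hopen
    ((Function.support_nonempty_iff.2 hJ_ne).image ℓ)
  rcases lt_or_gt_of_ne (show ℓ z ≠ 0 from hℓz) with h | h
  · exact ⟨z, hz, h⟩
  · exact ⟨-z, by rwa [hJ_even z], by simpa using h⟩

variable [MeasurableSpace E] [BorelSpace E] {μ : Measure E}

lemma nonlocalOp_const_sub_exp [μ.IsAddLeftInvariant] [μ.IsNegInvariant] (B : ℝ) (ℓ : E →L[ℝ] ℝ)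
    (x : E) :
    nonlocalOp μ J (extremalFlux a b) (fun y => B - Real.exp (ℓ y)) x =
      Real.exp (ℓ x) * ∫ z, J z * extremalFlux a b (1 - Real.exp (-ℓ z)) ∂μ := by
  rw [← integral_const_mul, ← integral_sub_left_eq_self _ μ x]
  refine integral_congr_ae (.of_forall fun y => ?_)
  have hexp : B - Real.exp (ℓ y) - (B - Real.exp (ℓ x)) =
      Real.exp (ℓ x) * (1 - Real.exp (-ℓ (x - y))) := by
    rw [mul_sub, ← Real.exp_add, map_sub]
    ring_nf
  simp only [hexp, extremalFlux_mul_of_nonneg (Real.exp_pos _).le]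
  ring

variable [IsFiniteMeasureOnCompacts μ]

lemma integral_mul_min_zero_neg [μ.IsOpenPosMeasure] (hJ_nonneg : ∀ z, 0 ≤ J z)
    (hJ_even : J.Even) (hJ : Continuous J) (hJ_supp : HasCompactSupport J) (hJ_ne : J ≠ 0)
    {ℓ : E →L[ℝ] ℝ} (hℓ : ℓ ≠ 0) : ∫ z, J z * min (ℓ z) 0 ∂μ < 0 := by
  obtain ⟨z, hz, hℓz⟩ := exists_ne_zero_and_neg hJ_even hJ hJ_ne hℓ
  have hpos : 0 < ∫ z, -(J z * min (ℓ z) 0) ∂μ :=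
    Continuous.integral_pos_of_hasCompactSupport_nonneg_nonzero (x := z) (by fun_prop)
      hJ_supp.mul_right.neg
      (fun z => neg_nonneg.2 (mul_nonpos_of_nonneg_of_nonpos (hJ_nonneg z) (min_le_right _ _)))
      (neg_ne_zero.2 (mul_ne_zero hz (by rw [min_eq_left hℓz.le]; exact hℓz.ne)))
  rwa [integral_neg, neg_pos] at hpos

-- The flux is at most `b + a k min (ℓ z) 0`, whose weighted integral is negative for large `k`.
lemma exists_integral_extremalFlux_one_sub_exp_neg [μ.IsOpenPosMeasure]
    (hJ_nonneg : ∀ z, 0 ≤ J z) (hJ_even : J.Even) (hJ : Continuous J)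
    (hJ_supp : HasCompactSupport J) (hJ_ne : J ≠ 0) (ha : 0 < a) (hab : a ≤ b)
    {ℓ : E →L[ℝ] ℝ} (hℓ : ℓ ≠ 0) :
    ∃ k : ℝ, ∫ z, J z * extremalFlux a b (1 - Real.exp (-(k * ℓ z))) ∂μ < 0 := by
  have hflux := continuous_extremalFlux (a := a) (b := b)
  have hint : ∀ f : E → ℝ, Continuous f → Integrable (fun z => J z * f z) μ := fun f hf =>
    (hJ.mul hf).integrable_of_hasCompactSupport hJ_supp.mul_right
  set m := ∫ z, J z * min (ℓ z) 0 ∂μ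
  have hm : m < 0 := integral_mul_min_zero_neg hJ_nonneg hJ_even hJ hJ_supp hJ_ne hℓ
  have hbJ : 0 ≤ b * ∫ z, J z ∂μ := mul_nonneg (ha.le.trans hab) (integral_nonneg hJ_nonneg)
  obtain ⟨k, hk⟩ : ∃ k, (b * ∫ z, J z ∂μ) / (a * -m) < k := exists_gt _
  have ham : 0 < a * -m := mul_pos ha (neg_pos.2 hm)
  have hk_nonneg : 0 ≤ k := (div_nonneg hbJ ham.le).trans hk.le
  refine ⟨k, ?_⟩
  calc ∫ z, J z * extremalFlux a b (1 - Real.exp (-(k * ℓ z))) ∂μ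
      ≤ ∫ z, (b * J z + a * k * (J z * min (ℓ z) 0)) ∂μ := by
        refine integral_mono (hint _ (by fun_prop))
          ((hint _ continuous_const).congr (.of_forall fun z => mul_comm _ b) |>.add
            ((hint _ (by fun_prop)).const_mul _)) fun z => ?_
        have hz := extremalFlux_one_sub_exp_neg_le ha.le hab (k * ℓ z)
        rw [← mul_zero k, ← mul_min_of_nonneg _ _ hk_nonneg] at hz
        linarith [mul_le_mul_of_nonneg_left hz (hJ_nonneg z)]
    _ = b * ∫ z, J z ∂μ + a * k * m := by
        rw [integral_add ((hJ.integrable_of_hasCompactSupport hJ_supp).const_mul b)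
          ((hint _ (by fun_prop)).const_mul _), integral_const_mul, integral_const_mul]
    _ < 0 := by linarith [(div_lt_iff₀ ham).1 hk]

lemma exists_isBarrier [Nontrivial E] [μ.IsAddLeftInvariant] [μ.IsNegInvariant]
    [μ.IsOpenPosMeasure] {K : Set E} (hK : IsCompact K) (hJ_nonneg : ∀ z, 0 ≤ J z)
    (hJ_even : J.Even) (hJ : Continuous J) (hJ_supp : HasCompactSupport J) (hJ_ne : J ≠ 0)
    (ha : 0 < a) (hab : a ≤ b) :
    ∃ δ > 0, ∃ φ, IsBarrier μ J (extremalFlux a b) K δ φ ∧ ∀ x ∈ K, 1 ≤ φ x := by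
  obtain ⟨ℓ₀, hℓ₀⟩ := exists_ne (0 : E →L[ℝ] ℝ)
  obtain ⟨k, hk⟩ := exists_integral_extremalFlux_one_sub_exp_neg (μ := μ) hJ_nonneg hJ_even hJ
    hJ_supp hJ_ne ha hab hℓ₀
  set ℓ := k • ℓ₀
  set I := ∫ z, J z * extremalFlux a b (1 - Real.exp (-ℓ z)) ∂μ
  have hI : I < 0 := hk
  have hS : IsCompact (K ∪ (K - tsupport J)) := hK.union <| by
    simpa only [sub_eq_add_neg] using hK.add hJ_supp.isCompact.neg
  obtain ⟨R, hR⟩ := hS.exists_bound_of_continuousOn ℓ.continuous.continuousOn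
  have hexp_le : ∀ y ∈ K ∪ (K - tsupport J), Real.exp (ℓ y) ≤ Real.exp R := fun y hy =>
    Real.exp_le_exp.2 ((le_abs_self _).trans (hR y hy))
  have hle_exp : ∀ y ∈ K, Real.exp (-R) ≤ Real.exp (ℓ y) := fun y hy =>
    Real.exp_le_exp.2 (neg_le_of_abs_le (hR y (.inl hy)))
  set B := 1 + Real.exp R
  have hB : 0 < B := by positivity
  have hδ : 0 < Real.exp (-R) * -I / B := by have := neg_pos.2 hI; positivity
  refine ⟨_, hδ, fun y => B - Real.exp (ℓ y), ⟨by fun_prop, fun x hx y hy => ?_, fun x hx => ?_⟩,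
    fun x hx => ?_⟩
  · have hyS : y ∈ K - tsupport J := ⟨x, hx, x - y, subset_tsupport J hy, sub_sub_cancel x y⟩
    linarith [hexp_le y (.inr hyS)]
  · rw [nonlocalOp_const_sub_exp]
    calc Real.exp (ℓ x) * I ≤ Real.exp (-R) * I :=
          mul_le_mul_of_nonpos_right (hle_exp x hx) hI.le
      _ = -(Real.exp (-R) * -I / B * B) := by field_simp
      _ < -(Real.exp (-R) * -I / B * (B - Real.exp (ℓ x))) :=
          neg_lt_neg (mul_lt_mul_of_pos_left (sub_lt_self B (Real.exp_pos _)) hδ)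
  · linarith [hexp_le x (.inl hx)]

end Barrier

section RegularSolution

/-- The flux `s ↦ s * G x s` is, for almost every `x`, continuous with diffusivity in `[a, b]`; the
value of `G x` at `0` is irrelevant. -/
def HasEllipticFlux {X : Type*} [MeasureSpace X] (G : X → ℝ → ℝ) (a b : ℝ) : Prop :=
  ∀ᵐ x, Continuous (fun s => s * G x s) ∧ ∀ s ≠ 0, a ≤ G x s ∧ G x s ≤ b

lemma HasEllipticFlux.comp_neg {X : Type*} [MeasureSpace X] {G : X → ℝ → ℝ} {a b : ℝ}
    (hG : HasEllipticFlux G a b) : HasEllipticFlux (fun x s => G x (-s)) a b := by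
  filter_upwards [hG] with x ⟨hcont, hbd⟩
  exact ⟨(hcont.comp continuous_neg).neg.congr fun s => by simp,
    fun s hs => hbd (-s) (neg_ne_zero.2 hs)⟩

/-- The curve of functions vanishing off `K` and equal to `u · t` on `K`; it swaps the arguments of
`u`, so that time comes first. -/
def zeroExtension {X : Type*} (K : Set X) (u : X → ℝ → ℝ) (t : ℝ) : X → ℝ :=
  K.indicator fun x => u x t

lemma apply_sub_eq_zero_of_notMem_add_tsupport {E : Type*} [TopologicalSpace E]
    [AddCommGroup E] [IsTopologicalAddGroup E] {J : E → ℝ} (hJ_even : J.Even) (hJ : Continuous J)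
    {s : Set E} {x y : E} (hx : x ∈ closure s) (hy : y ∉ s + tsupport J) : J (x - y) = 0 := by
  by_contra hne
  have hmem : y ∈ closure s + Function.support J :=
    ⟨x, hx, y - x, by rwa [Function.mem_support, ← neg_sub, hJ_even], add_sub_cancel x y⟩
  rw [hJ.isOpen_support.closure_add] at hmem
  exact hy (add_subset_add_left (subset_tsupport J) hmem)

variable {N : ℕ} {J : (Fin N → ℝ) → ℝ} {G : (Fin N → ℝ) → ℝ → ℝ} {Ω : Set (Fin N → ℝ)}
  {u₀ : (Fin N → ℝ) → ℝ} {u : (Fin N → ℝ) → ℝ → ℝ} {a b : ℝ}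

lemma HypJ.even (hJ : HypJ N J) : J.Even := fun z => hJ.2.1 _ _ (by simp)

lemma HypJ.ne_zero (hJ : HypJ N J) : J ≠ 0 := by
  rintro rfl
  simpa using hJ.2.2.2.2.1

lemma HypG.exists_hasEllipticFlux (hG : HypG N G) : ∃ a b, 0 < a ∧ HasEllipticFlux G a b := by
  obtain ⟨-, hcont, a, b, ha, -, hmono⟩ := hG
  refine ⟨a, b, ha, ?_⟩
  filter_upwards [hcont, hmono] with x hx hmono
  refine ⟨continuous_id.mul hx, fun s hs => ?_⟩
  rcases lt_or_gt_of_ne hs with hs | hs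
  · obtain ⟨h₁, h₂⟩ := hmono 0 s hs
    exact ⟨by nlinarith, by nlinarith⟩
  · obtain ⟨h₁, h₂⟩ := hmono s 0 hs
    exact ⟨by nlinarith, by nlinarith⟩

lemma HasEllipticFlux.le (hG : HasEllipticFlux G a b) : a ≤ b := by
  obtain ⟨x, -, hx⟩ := hG.exists
  exact (hx 1 one_ne_zero).1.trans (hx 1 one_ne_zero).2

namespace RegularSolutionHom

lemma neg (hu : RegularSolutionHom N J G Ω u₀ u) :
    RegularSolutionHom N J (fun x s => G x (-s)) Ω (-u₀) (fun x t => -u x t) := by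
  obtain ⟨hcont, heq, hext, hinit⟩ := hu
  refine ⟨hcont.neg, fun x hx t ht => ?_, fun y hy t ht => ?_, hinit.neg⟩
  · have hodd : ∀ c r s : ℝ, c * (-r - -s) * G x (-(-r - -s)) = -(c * (r - s) * G x (r - s)) :=
      fun c r s => by rw [show -(-r - -s) = r - s by ring]; ring
    simp only [hodd, integral_neg, heq x hx t ht, neg_add, Pi.neg_apply]
  · simp only [hext y hy t ht, neg_zero]

lemma isDirichletCurve (hu : RegularSolutionHom N J G Ω u₀ u) :
    IsDirichletCurve (closure Ω) (zeroExtension (closure Ω) u) where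
  continuousOn :=
    (hu.1.comp (f := Prod.swap) continuous_swap.continuousOn fun _ hp => hp.symm).congr
      fun _ hp => indicator_of_mem hp.2 _
  eq_zero _ _ hx := indicator_of_notMem hx _

lemma apply_zero {x : Fin N → ℝ} (hu : RegularSolutionHom N J G Ω u₀ u) (hx : x ∈ closure Ω) :
    u x 0 = u₀ x := by
  obtain ⟨hcont, -, -, hinit⟩ := hu
  have hcont_x : ContinuousOn (u x) (Ici 0) :=
    hcont.comp (f := fun t => (x, t)) (by fun_prop) fun t ht => ⟨hx, ht⟩
  exact tendsto_nhds_unique ((hcont_x 0 self_mem_Ici).mono Ioi_subset_Ici_self)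
    (hinit.tendsto_at hx)

lemma setIntegral_eq_nonlocalOp (hu : RegularSolutionHom N J G Ω u₀ u) (hΩ : IsOpen Ω)
    (hJ_even : J.Even) (hJ : Continuous J) {x : Fin N → ℝ} (hx : x ∈ closure Ω) {τ : ℝ}
    (hτ : 0 < τ) :
    ∫ y in Ω + tsupport J, J (x - y) * (u y τ - u x τ) * G x (u y τ - u x τ) =
      nonlocalOp volume J (fun s => s * G x s) (zeroExtension (closure Ω) u τ) x := by
  rw [nonlocalOp, ← integral_indicator hΩ.add_right.measurableSet]
  refine integral_congr_ae (.of_forall fun y => ?_)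
  by_cases hy : y ∈ Ω + tsupport J
  · have hvy : zeroExtension (closure Ω) u τ y = u y τ := by
      by_cases hyΩ : y ∈ closure Ω
      · exact indicator_of_mem hyΩ _
      · exact (indicator_of_notMem hyΩ _).trans (hu.2.2.1 y ⟨hy, hyΩ⟩ τ hτ).symm
    have hvx : zeroExtension (closure Ω) u τ x = u x τ := indicator_of_mem hx _
    simp only [indicator_of_mem hy, hvy, hvx, mul_assoc]
  · simp [hy, apply_sub_eq_zero_of_notMem_add_tsupport hJ_even hJ hx hy]

lemma eq_integral_nonlocalOp (hu : RegularSolutionHom N J G Ω u₀ u) (hΩ : IsOpen Ω)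
    (hJ_even : J.Even) (hJ : Continuous J) {x : Fin N → ℝ} (hx : x ∈ closure Ω) {t : ℝ}
    (ht : 0 ≤ t) :
    u x t = (∫ τ in 0..t,
      nonlocalOp volume J (fun s => s * G x s) (zeroExtension (closure Ω) u τ) x) + u₀ x := by
  rcases ht.eq_or_lt with rfl | ht
  · simpa using hu.apply_zero hx
  · rw [hu.2.1 x hx t ht, intervalIntegral.integral_of_le ht.le]
    congr 1
    exact setIntegral_congr_fun measurableSet_Ioc fun τ hτ =>
      hu.setIntegral_eq_nonlocalOp hΩ hJ_even hJ hx hτ.1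

lemma sub_eq_integral_nonlocalOp (hu : RegularSolutionHom N J G Ω u₀ u) (hΩ : IsOpen Ω)
    (hΩ_bdd : Bornology.IsBounded Ω) (hJ_even : J.Even) (hJ : Continuous J)
    (hJ_supp : HasCompactSupport J) {x : Fin N → ℝ} (hx : x ∈ closure Ω)
    (hflux : Continuous fun s => s * G x s) {s t : ℝ} (hs : 0 ≤ s) (hst : s ≤ t) :
    u x t - u x s = ∫ τ in s..t,
      nonlocalOp volume J (fun s => s * G x s) (zeroExtension (closure Ω) u τ) x := by
  have hcont := hu.isDirichletCurve.continuousOn_nonlocalOp_time (μ := volume)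
    hΩ_bdd.isCompact_closure hJ hJ_supp hflux hx t
  rw [hu.eq_integral_nonlocalOp hΩ hJ_even hJ hx (hs.trans hst),
    hu.eq_integral_nonlocalOp hΩ hJ_even hJ hx hs, add_sub_add_right_eq_sub,
    intervalIntegral.integral_interval_sub_left]
  · exact hcont.intervalIntegrable_of_Icc (hs.trans hst)
  · exact (hcont.mono (Icc_subset_Icc_right hst)).intervalIntegrable_of_Icc hs

lemma isSubsolution (hu : RegularSolutionHom N J G Ω u₀ u) (hΩ : IsOpen Ω)
    (hΩ_bdd : Bornology.IsBounded Ω) (hJ_nonneg : ∀ z, 0 ≤ J z) (hJ_even : J.Even)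
    (hJ : Continuous J) (hJ_supp : HasCompactSupport J) (hG : HasEllipticFlux G a b) :
    IsSubsolution volume J (extremalFlux a b) (closure Ω) (zeroExtension (closure Ω) u) := by
  have hcurve := hu.isDirichletCurve
  have hK := hΩ_bdd.isCompact_closure
  refine .of_dense hcurve hK hJ hJ_supp continuous_extremalFlux
    (inter_subset_left.trans subset_closure)
    (closure_minimal ((Measure.dense_of_ae hG).open_subset_closure_inter hΩ) isClosed_closure)
    fun x ⟨hxΩ, hflux, hbd⟩ s t hs hst => ?_
  have hx : x ∈ closure Ω := subset_closure hxΩ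
  have hv : ∀ r, zeroExtension (closure Ω) u r x = u x r := fun r => indicator_of_mem hx _
  rw [hv, hv, hu.sub_eq_integral_nonlocalOp hΩ hΩ_bdd hJ_even hJ hJ_supp hx hflux hs hst]
  have hintegrable : ∀ {g : ℝ → ℝ}, Continuous g → IntervalIntegrable
      (fun τ => nonlocalOp volume J g (zeroExtension (closure Ω) u τ) x) volume s t := fun hg =>
    ((hcurve.continuousOn_nonlocalOp_time hK hJ hJ_supp hg hx t).mono
      (Icc_subset_Icc_left hs)).intervalIntegrable_of_Icc hst
  refine intervalIntegral.integral_mono_on hst (hintegrable hflux)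
    (hintegrable continuous_extremalFlux) fun τ hτ => ?_
  have hτ_nonneg : 0 ≤ τ := hs.trans hτ.1
  exact nonlocalOp_mono hJ_nonneg (fun r => mul_le_extremalFlux (hbd r))
    (hcurve.integrable_nonlocalOp hK hJ hJ_supp hflux hτ_nonneg x)
    (hcurve.integrable_nonlocalOp hK hJ hJ_supp continuous_extremalFlux hτ_nonneg x)

lemma lt_barrier {δ c : ℝ} {φ : (Fin N → ℝ) → ℝ} (hu : RegularSolutionHom N J G Ω u₀ u)
    (hΩ : IsOpen Ω) (hΩ_bdd : Bornology.IsBounded Ω) (hJ_nonneg : ∀ z, 0 ≤ J z) (hJ_even : J.Even)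
    (hJ : Continuous J) (hJ_supp : HasCompactSupport J) (ha : 0 < a) (hG : HasEllipticFlux G a b)
    (hφ : IsBarrier volume J (extremalFlux a b) (closure Ω) δ φ) (hc : 0 < c)
    (h0 : ∀ x ∈ closure Ω, u x 0 < c * φ x) {x : Fin N → ℝ} (hx : x ∈ closure Ω) {t : ℝ}
    (ht : 0 ≤ t) : u x t < c * Real.exp (-(δ * t)) * φ x := by
  have hv : ∀ r, ∀ y ∈ closure Ω, zeroExtension (closure Ω) u r y = u y r := fun _ _ hy =>
    indicator_of_mem hy _
  rw [← hv t x hx]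
  refine (hu.isSubsolution hΩ hΩ_bdd hJ_nonneg hJ_even hJ hJ_supp hG).lt_barrier hφ
    hΩ_bdd.isCompact_closure hJ_nonneg hJ hJ_supp continuous_extremalFlux
    (monotone_extremalFlux ha.le (ha.le.trans hG.le))
    (fun _ s hc => extremalFlux_mul_of_nonneg hc s) hc (fun y hy => ?_) t ht x hx
  rw [hv 0 y hy]
  exact h0 y hy

end RegularSolutionHom

lemma tendstoUniformlyOn_zero_of_abs_le_mul_exp {X : Type*} {K : Set X} {f : ℝ → X → ℝ} {C δ : ℝ}
    (hδ : 0 < δ) (hf : ∀ x ∈ K, ∀ t, 0 ≤ t → |f t x| ≤ C * Real.exp (-(δ * t))) :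
    TendstoUniformlyOn f (fun _ => 0) atTop K := by
  have hlim : Tendsto (fun t => C * Real.exp (-(δ * t))) atTop (𝓝 0) := by
    simpa using (Real.tendsto_exp_neg_atTop_nhds_zero.comp
      (tendsto_id.const_mul_atTop hδ)).const_mul C
  refine Metric.tendstoUniformlyOn_iff.2 fun ε hε => ?_
  filter_upwards [hlim.eventually_lt_const hε, eventually_ge_atTop 0] with t htε ht x hx
  rw [dist_zero_left, Real.norm_eq_abs]
  exact (hf x hx t ht).trans_lt htε

theorem decay_constant_initial_datum_general (hN : 1 ≤ N) (hΩ : IsOpen Ω)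
    (hΩ_bdd : Bornology.IsBounded Ω) (hJ_nonneg : ∀ z, 0 ≤ J z) (hJ_even : J.Even)
    (hJ : Continuous J) (hJ_supp : HasCompactSupport J) (hJ_ne : J ≠ 0) (ha : 0 < a)
    (hG : HasEllipticFlux G a b) (hu : RegularSolutionHom N J G Ω u₀ u) :
    ∃ C δ, 0 < δ ∧ ∀ x ∈ closure Ω, ∀ t, 0 ≤ t → |u x t| ≤ C * Real.exp (-(δ * t)) := by
  have : Nonempty (Fin N) := ⟨⟨0, hN⟩⟩
  have hK := hΩ_bdd.isCompact_closure
  obtain ⟨δ, hδ, φ, hφ, hφ_one⟩ := exists_isBarrier (μ := volume) hK hJ_nonneg hJ_even hJ hJ_supp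
    hJ_ne ha hG.le
  obtain ⟨Φ, hΦ⟩ := hK.exists_bound_of_continuousOn hφ.continuous.continuousOn
  have hu_zero : ContinuousOn (fun x => u x 0) (closure Ω) :=
    hu.1.comp (f := fun x => (x, 0)) (by fun_prop) fun x hx => ⟨hx, self_mem_Ici⟩
  obtain ⟨M, hM⟩ := hK.exists_bound_of_continuousOn hu_zero
  have hc : 0 < |M| + 1 := by positivity
  have hinit : ∀ x ∈ closure Ω, |u x 0| < (|M| + 1) * φ x := fun x hx => calc
    |u x 0| ≤ |M| := (hM x hx).trans (le_abs_self M)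
    _ < |M| + 1 := lt_add_one _
    _ ≤ (|M| + 1) * φ x := le_mul_of_one_le_right hc.le (hφ_one x hx)
  refine ⟨(|M| + 1) * Φ, δ, hδ, fun x hx t ht => ?_⟩
  calc |u x t| ≤ (|M| + 1) * Real.exp (-(δ * t)) * φ x := by
        refine abs_le'.2 ⟨?_, ?_⟩
        · exact (hu.lt_barrier hΩ hΩ_bdd hJ_nonneg hJ_even hJ hJ_supp ha hG hφ hc
            (fun y hy => (le_abs_self _).trans_lt (hinit y hy)) hx ht).le
        · exact (hu.neg.lt_barrier hΩ hΩ_bdd hJ_nonneg hJ_even hJ hJ_supp ha hG.comp_neg hφ hc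
            (fun y hy => (neg_le_abs _).trans_lt (hinit y hy)) hx ht).le
    _ ≤ (|M| + 1) * Real.exp (-(δ * t)) * Φ := by
        gcongr
        exact (le_abs_self _).trans (hΦ x hx)
    _ = (|M| + 1) * Φ * Real.exp (-(δ * t)) := by ring

end RegularSolution

/-- **Uniform decay to zero of the regular solution with constant initial datum `λ ≠ 0`**
of the homogeneous nonlocal Dirichlet problem. -/
theorem decay_constant_initial_datum
    (N : ℕ) (hN : 1 ≤ N) (Ω : Set (Fin N → ℝ)) (hΩopen : IsOpen Ω)
    (hΩbdd : Bornology.IsBounded Ω)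
    (J : (Fin N → ℝ) → ℝ) (hJ : HypJ N J)
    (G : (Fin N → ℝ) → ℝ → ℝ) (hG : HypG N G)
    (lam : ℝ) (hlam : lam ≠ 0)
    (u : (Fin N → ℝ) → ℝ → ℝ) (hu : RegularSolutionHom N J G Ω (fun _ => lam) u) :
    TendstoUniformlyOn (fun t x => u x t) (fun _ => (0 : ℝ)) atTop (closure Ω) := by
  obtain ⟨a, b, ha, hflux⟩ := hG.exists_hasEllipticFlux
  obtain ⟨C, δ, hδ, hdecay⟩ := decay_constant_initial_datum_general hN hΩopen hΩbdd hJ.1 hJ.even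
    hJ.2.2.1 hJ.2.2.2.1 hJ.ne_zero ha hflux hu
  exact tendstoUniformlyOn_zero_of_abs_le_mul_exp hδ hdecay
end
end

section
/- Assume J satisfies hypothesis (J) and G satisfies hypothesis (G), and let T > 0. Let u be a subsolution of the Cauchy problem (C) with initial datum u₀ ∈ C(ℝ^N) ∩ L^∞(ℝ^N) and v a supersolution with initial datum v₀ ∈ C(ℝ^N) ∩ L^∞(ℝ^N). If u₀ ≤ v₀ on ℝ^N, then u ≤ v on ℝ^N × (0,T). -/
open MeasureTheory Set Filter Topology Pointwise

noncomputable section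

/-- The regularity `u ∈ C⁰([0,T); C(ℝ^N)) ∩ C¹((0,T); C(ℝ^N))`, the time derivative
being the function `ut`. -/
def CauchyC0C1 (N : ℕ) (T : ℝ) (u ut : (Fin N → ℝ) → ℝ → ℝ) : Prop :=
  (∀ t ∈ Ico (0 : ℝ) T, Continuous fun x => u x t) ∧
  (∀ t₀ ∈ Ico (0 : ℝ) T,
    TendstoUniformly (fun t x => u x t) (fun x => u x t₀) (𝓝[Ico (0 : ℝ) T] t₀)) ∧
  (∀ t ∈ Ioo (0 : ℝ) T, Continuous fun x => ut x t) ∧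
  (∀ t₀ ∈ Ioo (0 : ℝ) T,
    TendstoUniformly (fun t x => ut x t) (fun x => ut x t₀) (𝓝[Ioo (0 : ℝ) T] t₀)) ∧
  (∀ x, ∀ t ∈ Ioo (0 : ℝ) T, HasDerivAt (fun s => u x s) (ut x t) t)

/-- A subsolution of the nonlocal Cauchy problem (C) with initial datum `u₀`. -/
def CauchySubsolution (N : ℕ) (T : ℝ) (J : (Fin N → ℝ) → ℝ) (G : (Fin N → ℝ) → ℝ → ℝ)
    (u₀ : (Fin N → ℝ) → ℝ) (u : (Fin N → ℝ) → ℝ → ℝ) : Prop :=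
  (∃ ut, CauchyC0C1 N T u ut ∧
    ∀ x, ∀ t ∈ Ioo (0 : ℝ) T,
      ut x t ≤ ∫ y : Fin N → ℝ, J (x - y) * (u y t - u x t) * G x (u y t - u x t)) ∧
  ∀ x, u x 0 ≤ u₀ x

/-- A supersolution of the nonlocal Cauchy problem (C) with initial datum `v₀`. -/
def CauchySupersolution (N : ℕ) (T : ℝ) (J : (Fin N → ℝ) → ℝ) (G : (Fin N → ℝ) → ℝ → ℝ)
    (v₀ : (Fin N → ℝ) → ℝ) (v : (Fin N → ℝ) → ℝ → ℝ) : Prop :=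
  (∃ vt, CauchyC0C1 N T v vt ∧
    ∀ x, ∀ t ∈ Ioo (0 : ℝ) T,
      vt x t ≥ ∫ y : Fin N → ℝ, J (x - y) * (v y t - v x t) * G x (v y t - v x t)) ∧
  ∀ x, v x 0 ≥ v₀ x

/-!
If `w ≤ C` on `X × [a, b]` and `w` is a difference of a sub- and a supersolution with `w(·, a) ≤ 0`,
then `∂ₜw ≤ α (C - w)`, because the nonlinearity is monotone and Lipschitz. Integrating gives
`w ≤ C (1 - exp (-α (b - a)))`, so taking for `C` the supremum of `w⁺` forces `C ≤ 0`. Finiteness of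
this supremum is only clear on short time intervals, as time continuity is uniform in space, so one
continues from `[0, a]` to `[0, a + ε]`. The differential inequality is available for almost every point of
space only; continuity in space extends the bound to all points, as the good points are dense.
-/

open scoped NNReal

section MaximumPrinciple

lemma le_mul_one_sub_exp_of_deriv_le {f : ℝ → ℝ} {a b α C : ℝ}
    (hf : ContinuousOn f (Icc a b)) (hd : ∀ t ∈ Ioo a b, DifferentiableAt ℝ f t)
    (hderiv : ∀ t ∈ Ioo a b, deriv f t ≤ α * (C - f t)) (ha : f a ≤ 0)
    {t : ℝ} (ht : t ∈ Icc a b) :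
    f t ≤ C * (1 - Real.exp (-(α * (t - a)))) := by
  set g : ℝ → ℝ := fun s => Real.exp (α * (s - a)) * (f s - C)
  have hg : ∀ s ∈ Ioo a b,
      HasDerivAt g (Real.exp (α * (s - a)) * (deriv f s - α * (C - f s))) s := by
    intro s hs
    have hlin : HasDerivAt (fun r => α * (r - a)) α s := by
      simpa using ((hasDerivAt_id s).sub_const a).const_mul α
    exact (hlin.exp.mul ((hd s hs).hasDerivAt.sub_const C)).congr_deriv (by ring)
  have hanti : AntitoneOn g (Icc a b) := by
    refine antitoneOn_of_deriv_nonpos (convex_Icc a b) (by fun_prop) ?_ ?_ <;>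
      rw [interior_Icc] <;> intro s hs
    · exact (hg s hs).differentiableAt.differentiableWithinAt
    · rw [(hg s hs).deriv]
      exact mul_nonpos_of_nonneg_of_nonpos (Real.exp_pos _).le (sub_nonpos.2 (hderiv s hs))
  have hga : g a ≤ -C := by simpa [g] using ha
  have hle : Real.exp (α * (t - a)) * (f t - C) ≤ -C :=
    (hanti (left_mem_Icc.2 (ht.1.trans ht.2)) ht ht.1).trans hga
  calc f t = Real.exp (-(α * (t - a))) * (Real.exp (α * (t - a)) * (f t - C)) + C := by
        rw [← mul_assoc, ← Real.exp_add, neg_add_cancel, Real.exp_zero]; ring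
    _ ≤ Real.exp (-(α * (t - a))) * -C + C := by gcongr
    _ = C * (1 - Real.exp (-(α * (t - a)))) := by ring

variable {X : Type*} {D : Set X} {α : ℝ} {w : X → ℝ → ℝ}

/-- The evolution inequality `∂ₜw ≤ α (sup w - w)` at the points of `D`, for times in `s`. The
supremum is replaced by an arbitrary upper bound, so nothing is asserted at the times at which `w`
is unbounded above. -/
def DerivLeGapToBoundOn (α : ℝ) (D : Set X) (s : Set ℝ) (w : X → ℝ → ℝ) : Prop :=
  ∀ x ∈ D, ∀ t ∈ s, ∀ M, (∀ y, w y t ≤ M) → deriv (w x) t ≤ α * (M - w x t)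

lemma DerivLeGapToBoundOn.mono {s s' : Set ℝ} (h : DerivLeGapToBoundOn α D s' w) (hs : s ⊆ s') :
    DerivLeGapToBoundOn α D s w :=
  fun x hx t ht => h x hx t (hs ht)

variable [TopologicalSpace X]

lemma DerivLeGapToBoundOn.le_mul_one_sub_exp {a b C : ℝ} (hD : Dense D) (hα : 0 ≤ α)
    (hwx : ∀ t ∈ Icc a b, Continuous fun x => w x t)
    (hwt : ∀ x, ContinuousOn (w x) (Icc a b))
    (hd : ∀ x, ∀ t ∈ Ioo a b, DifferentiableAt ℝ (w x) t)
    (hderiv : DerivLeGapToBoundOn α D (Ioo a b) w) (ha : ∀ x, w x a ≤ 0)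
    (hC₀ : 0 ≤ C) (hC : ∀ t ∈ Icc a b, ∀ x, w x t ≤ C) {t : ℝ} (ht : t ∈ Icc a b) (x : X) :
    w x t ≤ C * (1 - Real.exp (-(α * (b - a)))) := by
  suffices h : D ⊆ {x | w x t ≤ C * (1 - Real.exp (-(α * (b - a))))} from
    closure_minimal h (isClosed_le (hwx t ht) continuous_const) (hD x)
  intro x hx
  calc w x t ≤ C * (1 - Real.exp (-(α * (t - a)))) :=
        le_mul_one_sub_exp_of_deriv_le (hwt x) (hd x)
          (fun s hs => hderiv x hx s hs C (hC s (Ioo_subset_Icc_self hs))) (ha x) ht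
    _ ≤ C * (1 - Real.exp (-(α * (b - a)))) := by gcongr; exact ht.2

lemma DerivLeGapToBoundOn.nonpos_of_bounded {a b C : ℝ} (hD : Dense D) (hα : 0 ≤ α)
    (hwx : ∀ t ∈ Icc a b, Continuous fun x => w x t)
    (hwt : ∀ x, ContinuousOn (w x) (Icc a b))
    (hd : ∀ x, ∀ t ∈ Ioo a b, DifferentiableAt ℝ (w x) t)
    (hderiv : DerivLeGapToBoundOn α D (Ioo a b) w) (ha : ∀ x, w x a ≤ 0)
    (hC : ∀ t ∈ Icc a b, ∀ x, w x t ≤ C) {t : ℝ} (ht : t ∈ Icc a b) (x : X) :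
    w x t ≤ 0 := by
  set A : Set ℝ := insert 0 {r | ∃ t ∈ Icc a b, ∃ x, w x t = r}
  have hA : BddAbove A :=
    BddAbove.insert 0 ⟨C, by rintro _ ⟨t, ht, x, rfl⟩; exact hC t ht x⟩
  obtain ⟨S, hS⟩ : ∃ S, IsLUB A S := Real.exists_isLUB (insert_nonempty _ _) hA
  have hS₀ : 0 ≤ S := hS.1 (mem_insert _ _)
  have hwS : ∀ t ∈ Icc a b, ∀ x, w x t ≤ S :=
    fun t ht x => hS.1 (mem_insert_of_mem _ ⟨t, ht, x, rfl⟩)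
  have hab : 0 ≤ α * (b - a) := mul_nonneg hα (sub_nonneg.2 (ht.1.trans ht.2))
  have hself : S ≤ S * (1 - Real.exp (-(α * (b - a)))) := by
    refine hS.2 ?_
    rintro _ (rfl | ⟨t, ht, x, rfl⟩)
    · exact mul_nonneg hS₀ (sub_nonneg.2 (Real.exp_le_one_iff.2 (neg_nonpos.2 hab)))
    · exact hderiv.le_mul_one_sub_exp hD hα hwx hwt hd ha hS₀ hwS ht x
  have hS_nonpos : S ≤ 0 :=
    nonpos_of_mul_nonpos_left (by linarith) (Real.exp_pos (-(α * (b - a))))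
  exact (hwS t ht x).trans hS_nonpos

end MaximumPrinciple

section Evolution

variable {X : Type*} [TopologicalSpace X] {T : ℝ} {u v w : X → ℝ → ℝ}

/-- The regularity `u ∈ C([0, T); C(X))`, for uniform convergence on `X`, together with pointwise
differentiability in time on `(0, T)`. -/
structure IsTimeRegular (T : ℝ) (u : X → ℝ → ℝ) : Prop where
  continuous : ∀ t ∈ Ico 0 T, Continuous fun x => u x t
  tendstoUniformly : ∀ t₀ ∈ Ico 0 T,
    TendstoUniformly (fun t x => u x t) (fun x => u x t₀) (𝓝[Ico 0 T] t₀)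
  differentiableAt : ∀ x, ∀ t ∈ Ioo 0 T, DifferentiableAt ℝ (u x) t

/-- Classical subsolutions of the abstract evolution equation `∂ₜu = A u` on `[0, T)`. -/
structure IsEvolutionSubsolution (T : ℝ) (A : (X → ℝ) → X → ℝ) (u : X → ℝ → ℝ) : Prop
    extends IsTimeRegular T u where
  deriv_le : ∀ x, ∀ t ∈ Ioo 0 T, deriv (u x) t ≤ A (fun y => u y t) x

/-- Classical supersolutions of the abstract evolution equation `∂ₜu = A u` on `[0, T)`. -/
structure IsEvolutionSupersolution (T : ℝ) (A : (X → ℝ) → X → ℝ) (u : X → ℝ → ℝ) : Prop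
    extends IsTimeRegular T u where
  le_deriv : ∀ x, ∀ t ∈ Ioo 0 T, A (fun y => u y t) x ≤ deriv (u x) t

namespace IsTimeRegular

lemma sub (hu : IsTimeRegular T u) (hv : IsTimeRegular T v) :
    IsTimeRegular T fun x t => u x t - v x t where
  continuous t ht := (hu.continuous t ht).sub (hv.continuous t ht)
  tendstoUniformly t ht := (hu.tendstoUniformly t ht).sub (hv.tendstoUniformly t ht)
  differentiableAt x t ht := (hu.differentiableAt x t ht).sub (hv.differentiableAt x t ht)

lemma continuousOn (hw : IsTimeRegular T w) (x : X) : ContinuousOn (w x) (Ico 0 T) :=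
  fun t ht => (hw.tendstoUniformly t ht).tendsto_at x

lemma exists_forall_Icc_le_add_one (hw : IsTimeRegular T w) {a y : ℝ} (ha : a ∈ Ico 0 T)
    (hy : a < y) :
    ∃ c ∈ Ioc a y, c < T ∧ ∀ t ∈ Icc a c, ∀ x, w x t ≤ w x a + 1 := by
  have hnhds : 𝓝[≥] a ≤ 𝓝[Ico 0 T] a :=
    nhdsWithin_le_of_mem (mem_of_superset (Ico_mem_nhdsGE ha.2) (Ico_subset_Ico_left ha.1))
  have hclose : ∀ᶠ t in 𝓝[≥] a, ∀ x, w x t ≤ w x a + 1 := by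
    filter_upwards [hnhds (Metric.tendstoUniformly_iff.1 (hw.tendstoUniformly a ha) 1 one_pos)]
      with t ht x
    linarith [neg_lt_of_abs_lt (Real.dist_eq _ _ ▸ ht x)]
  obtain ⟨c, hac, hc⟩ := mem_nhdsGE_iff_exists_Icc_subset.1
    (hclose.and (Ico_mem_nhdsGE (lt_min hy ha.2)))
  have hcy : c < min y T := (hc (right_mem_Icc.2 hac.le)).2.2
  exact ⟨c, ⟨hac, hcy.le.trans (min_le_left _ _)⟩, hcy.trans_le (min_le_right _ _),
    fun t ht => (hc ht).1⟩

theorem nonpos {D : Set X} {α : ℝ} (hw : IsTimeRegular T w) (hD : Dense D) (hα : 0 ≤ α)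
    (hderiv : DerivLeGapToBoundOn α D (Ioo 0 T) w) (h₀ : ∀ x, w x 0 ≤ 0)
    {b : ℝ} (hb : b ∈ Ico 0 T) (x : X) : w x b ≤ 0 := by
  have : Nonempty X := ⟨x⟩
  suffices h : Icc 0 b ⊆ {t | ∀ x, w x t ≤ 0} from h (right_mem_Icc.2 hb.1) x
  refine IsClosed.Icc_subset_of_forall_exists_gt ?_ h₀ ?_
  · have hclosed : IsClosed (⋂ x, Icc 0 b ∩ w x ⁻¹' Iic 0) := isClosed_iInter fun x =>
      ((hw.continuousOn x).mono (Icc_subset_Ico_right hb.2)).preimage_isClosed_of_isClosed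
        isClosed_Icc isClosed_Iic
    convert hclosed using 1
    rw [← inter_iInter, inter_comm]
    congr 1
    ext t
    simp
  · rintro a ⟨hwa, ha⟩ y hy
    have haT : a ∈ Ico 0 T := ⟨ha.1, ha.2.trans hb.2⟩
    obtain ⟨c, hc, hcT, hbound⟩ := hw.exists_forall_Icc_le_add_one haT hy
    have hIcc : Icc a c ⊆ Ico 0 T := fun t ht => ⟨haT.1.trans ht.1, ht.2.trans_lt hcT⟩
    have hIoo : Ioo a c ⊆ Ioo 0 T := Ioo_subset_Ioo haT.1 hcT.le
    have hle_one : ∀ t ∈ Icc a c, ∀ x, w x t ≤ 1 := fun t ht x => by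
      linarith [hbound t ht x, hwa x]
    exact ⟨c, (hderiv.mono hIoo).nonpos_of_bounded hD hα
      (fun t ht => hw.continuous t (hIcc ht)) (fun x => (hw.continuousOn x).mono hIcc)
      (fun x t ht => hw.differentiableAt x t (hIoo ht)) hwa hle_one (right_mem_Icc.2 hc.1.le), hc⟩

end IsTimeRegular

/-- The one-sided Lipschitz bound `A f - A g ≤ α (sup (f - g) - (f - g))` at the points of `D`, for
continuous `f` and `g`. The supremum is replaced by an arbitrary upper bound. -/
def IsOneSidedLipschitzOn (α : ℝ) (D : Set X) (A : (X → ℝ) → X → ℝ) : Prop :=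
  ∀ x ∈ D, ∀ f g : X → ℝ, Continuous f → Continuous g → ∀ M, (∀ y, f y - g y ≤ M) →
    A f x - A g x ≤ α * (M - (f x - g x))

theorem IsEvolutionSubsolution.le_supersolution {A : (X → ℝ) → X → ℝ} {D : Set X} {α : ℝ}
    (hu : IsEvolutionSubsolution T A u) (hv : IsEvolutionSupersolution T A v)
    (hD : Dense D) (hα : 0 ≤ α) (hA : IsOneSidedLipschitzOn α D A)
    (h₀ : ∀ x, u x 0 ≤ v x 0) {t : ℝ} (ht : t ∈ Ico 0 T) (x : X) : u x t ≤ v x t := by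
  refine sub_nonpos.1 ((hu.toIsTimeRegular.sub hv.toIsTimeRegular).nonpos hD hα ?_
    (fun x => sub_nonpos.2 (h₀ x)) ht x)
  intro x hx t ht M hM
  have ht' := Ioo_subset_Ico_self ht
  calc deriv (fun s => u x s - v x s) t = deriv (u x) t - deriv (v x) t :=
        deriv_fun_sub (hu.differentiableAt x t ht) (hv.differentiableAt x t ht)
    _ ≤ A (fun y => u y t) x - A (fun y => v y t) x :=
        sub_le_sub (hu.deriv_le x t ht) (hv.le_deriv x t ht)
    _ ≤ α * (M - (u x t - v x t)) :=
        hA x hx _ _ (hu.continuous t ht') (hv.continuous t ht') M hM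

end Evolution

section NonlocalOperator

lemma sub_le_mul_of_monotone_of_lipschitzWith {φ : ℝ → ℝ} {L : ℝ≥0} (hmono : Monotone φ)
    (hlip : LipschitzWith L φ) {r s σ : ℝ} (hr : 0 ≤ r) (h : s - σ ≤ r) :
    φ s - φ σ ≤ L * r := by
  rcases le_total s σ with hs | hs
  · exact (sub_nonpos.2 (hmono hs)).trans (by positivity)
  · calc φ s - φ σ ≤ dist (φ s) (φ σ) := Real.sub_le_dist _ _
      _ ≤ L * dist s σ := hlip.dist_le_mul s σ
      _ ≤ L * r := by rw [Real.dist_eq, abs_of_nonneg (sub_nonneg.2 hs)]; gcongr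

variable {X : Type*} [TopologicalSpace X] [MeasurableSpace X] {μ : Measure X}
  {k : X → X → ℝ} {Φ : X → ℝ → ℝ} {κ L : ℝ≥0}

/-- Nonnegative interaction kernels of compact support and of mass at most `κ` around each point. -/
structure IsNonlocalKernel (μ : Measure X) (k : X → X → ℝ) (κ : ℝ≥0) : Prop where
  nonneg : ∀ x y, 0 ≤ k x y
  integrable : ∀ x, Integrable (k x) μ
  hasCompactSupport : ∀ x, HasCompactSupport (k x)
  integral_le : ∀ x, ∫ y, k x y ∂μ ≤ κ

/-- The nonlocal diffusion operator with kernel `k` and flux `Φ`. The equation of problem (C)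
corresponds to `k x y = J (x - y)` and `Φ x s = s * G x s`. -/
def nonlocalOperator (μ : Measure X) (k : X → X → ℝ) (Φ : X → ℝ → ℝ) (f : X → ℝ) (x : X) : ℝ :=
  ∫ y, k x y * Φ x (f y - f x) ∂μ

/-- The points at which the flux is nondecreasing and `L`-Lipschitz. -/
def monotoneLipschitzPoints (Φ : X → ℝ → ℝ) (L : ℝ≥0) : Set X :=
  {x | Monotone (Φ x) ∧ LipschitzWith L (Φ x)}

variable [OpensMeasurableSpace X]

lemma integrable_mul_of_hasCompactSupport {p h : X → ℝ} (hp : Integrable p μ)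
    (hps : HasCompactSupport p) (hh : Continuous h) : Integrable (fun y => p y * h y) μ := by
  rw [← integrableOn_iff_integrable_of_support_subset
    ((Function.support_mul_subset_left p h).trans (subset_tsupport p))]
  exact hp.integrableOn.mul_continuousOn_of_subset hh.continuousOn
    (isClosed_tsupport p).measurableSet hps Subset.rfl

theorem IsNonlocalKernel.isOneSidedLipschitzOn (hk : IsNonlocalKernel μ k κ) :
    IsOneSidedLipschitzOn (κ * L) (monotoneLipschitzPoints Φ L) (nonlocalOperator μ k Φ) := by
  rintro x ⟨hmono, hlip⟩ f g hf hg M hM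
  have hint : ∀ f : X → ℝ, Continuous f → Integrable (fun y => k x y * Φ x (f y - f x)) μ :=
    fun f hf => integrable_mul_of_hasCompactSupport (hk.integrable x) (hk.hasCompactSupport x)
      (hlip.continuous.comp (hf.sub continuous_const))
  have hr : 0 ≤ M - (f x - g x) := sub_nonneg.2 (hM x)
  have hflux : ∀ y, Φ x (f y - f x) - Φ x (g y - g x) ≤ L * (M - (f x - g x)) := fun y =>
    sub_le_mul_of_monotone_of_lipschitzWith hmono hlip hr (by linarith [hM y])
  calc nonlocalOperator μ k Φ f x - nonlocalOperator μ k Φ g x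
      = ∫ y, k x y * Φ x (f y - f x) - k x y * Φ x (g y - g x) ∂μ :=
        (integral_sub (hint f hf) (hint g hg)).symm
    _ ≤ ∫ y, k x y * (L * (M - (f x - g x))) ∂μ := by
        refine integral_mono ((hint f hf).sub (hint g hg)) ((hk.integrable x).mul_const _) ?_
        intro y
        simpa only [mul_sub] using mul_le_mul_of_nonneg_left (hflux y) (hk.nonneg x y)
    _ = (∫ y, k x y ∂μ) * (L * (M - (f x - g x))) := integral_mul_const _ _
    _ ≤ κ * (L * (M - (f x - g x))) := by gcongr; exact hk.integral_le x
    _ = κ * L * (M - (f x - g x)) := (mul_assoc _ _ _).symm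

theorem comparison_principle_cauchy_general {T : ℝ} {u v : X → ℝ → ℝ}
    (hk : IsNonlocalKernel μ k κ) (hΦ : Dense (monotoneLipschitzPoints Φ L))
    (hu : IsEvolutionSubsolution T (nonlocalOperator μ k Φ) u)
    (hv : IsEvolutionSupersolution T (nonlocalOperator μ k Φ) v)
    (h₀ : ∀ x, u x 0 ≤ v x 0) : ∀ x, ∀ t ∈ Ico 0 T, u x t ≤ v x t :=
  fun x _ ht => hu.le_supersolution hv hΦ (mul_nonneg κ.coe_nonneg L.coe_nonneg)
    hk.isOneSidedLipschitzOn h₀ ht x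

end NonlocalOperator

section CauchyProblem

variable {N : ℕ} {T : ℝ} {J : (Fin N → ℝ) → ℝ} {G : (Fin N → ℝ) → ℝ → ℝ}
  {u₀ v₀ : (Fin N → ℝ) → ℝ} {u ut v : (Fin N → ℝ) → ℝ → ℝ}

lemma HypJ.isNonlocalKernel (hJ : HypJ N J) :
    IsNonlocalKernel volume (fun x y => J (x - y)) 1 := by
  obtain ⟨hnonneg, -, hcont, hsupp, hmass, -⟩ := hJ
  have hint : Integrable J := hcont.integrable_of_hasCompactSupport hsupp
  exact
    { nonneg := fun x y => hnonneg (x - y)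
      integrable := fun x => hint.comp_sub_left x
      hasCompactSupport := fun x => hsupp.comp_homeomorph (Homeomorph.subLeft x)
      integral_le := fun x => by rw [integral_sub_left_eq_self J volume x, hmass, NNReal.coe_one] }

lemma HypG.exists_dense_monotoneLipschitzPoints (hG : HypG N G) :
    ∃ L : ℝ≥0, Dense (monotoneLipschitzPoints (fun x s => s * G x s) L) := by
  obtain ⟨-, -, α₁, α₂, hα₁, hα₁₂, hbounds⟩ := hG
  lift α₂ to ℝ≥0 using hα₁.le.trans hα₁₂
  refine ⟨α₂, Measure.dense_of_ae (hbounds.mono fun x hx => ?_)⟩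
  simp only [mul_comm (G x _)] at hx
  have hmono : Monotone fun s => s * G x s := monotone_iff_forall_lt.2 fun σ s h =>
    sub_nonneg.1 ((mul_nonneg hα₁.le (sub_nonneg.2 h.le)).trans (hx s σ h).1)
  refine ⟨hmono, LipschitzWith.of_le_add_mul _ fun s σ => ?_⟩
  rcases le_or_gt s σ with h | h
  · exact (hmono h).trans (le_add_of_nonneg_right (by positivity))
  · rw [Real.dist_eq, abs_of_pos (sub_pos.2 h)]
    exact sub_le_iff_le_add'.1 (hx s σ h).2

lemma CauchyC0C1.isTimeRegular (hu : CauchyC0C1 N T u ut) : IsTimeRegular T u where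
  continuous := hu.1
  tendstoUniformly := hu.2.1
  differentiableAt x t ht := (hu.2.2.2.2 x t ht).differentiableAt

lemma CauchyC0C1.deriv_eq (hu : CauchyC0C1 N T u ut) (x : Fin N → ℝ) {t : ℝ} (ht : t ∈ Ioo 0 T) :
    deriv (u x) t = ut x t :=
  (hu.2.2.2.2 x t ht).deriv

lemma CauchySubsolution.isEvolutionSubsolution (hu : CauchySubsolution N T J G u₀ u) :
    IsEvolutionSubsolution T
      (nonlocalOperator volume (fun x y => J (x - y)) fun x s => s * G x s) u := by
  obtain ⟨⟨ut, hreg, hle⟩, -⟩ := hu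
  refine ⟨hreg.isTimeRegular, fun x t ht => ?_⟩
  simpa only [nonlocalOperator, hreg.deriv_eq x ht, mul_assoc] using hle x t ht

lemma CauchySupersolution.isEvolutionSupersolution (hv : CauchySupersolution N T J G v₀ v) :
    IsEvolutionSupersolution T
      (nonlocalOperator volume (fun x y => J (x - y)) fun x s => s * G x s) v := by
  obtain ⟨⟨vt, hreg, hge⟩, -⟩ := hv
  refine ⟨hreg.isTimeRegular, fun x t ht => ?_⟩
  simpa only [nonlocalOperator, hreg.deriv_eq x ht, mul_assoc] using hge x t ht

end CauchyProblem

/-- **Comparison Principle for the nonlocal Cauchy problem (C)**. -/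
theorem comparison_principle_cauchy
    (N : ℕ) (hN : 1 ≤ N) (T : ℝ) (hT : 0 < T)
    (J : (Fin N → ℝ) → ℝ) (hJ : HypJ N J)
    (G : (Fin N → ℝ) → ℝ → ℝ) (hG : HypG N G)
    (u₀ v₀ : (Fin N → ℝ) → ℝ)
    (hu₀ : Continuous u₀ ∧ ∃ M, ∀ x, |u₀ x| ≤ M)
    (hv₀ : Continuous v₀ ∧ ∃ M, ∀ x, |v₀ x| ≤ M)
    (u v : (Fin N → ℝ) → ℝ → ℝ)
    (hu : CauchySubsolution N T J G u₀ u)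
    (hv : CauchySupersolution N T J G v₀ v)
    (h₀ : ∀ x, u₀ x ≤ v₀ x) :
    ∀ x, ∀ t ∈ Ioo (0 : ℝ) T, u x t ≤ v x t := by
  obtain ⟨L, hL⟩ := hG.exists_dense_monotoneLipschitzPoints
  exact fun x t ht => comparison_principle_cauchy_general hJ.isNonlocalKernel hL
    hu.isEvolutionSubsolution hv.isEvolutionSupersolution
    (fun x => (hu.2 x).trans ((h₀ x).trans (hv.2 x))) x t (Ioo_subset_Ico_self ht)
end
end

section
/- Let μ : ℝ^N → ℝ be any measurable function and define G_μ(x,s) = 1 + μ(x)s/(2(1+μ(x)²s²)) for x ∈ ℝ^N and s ∈ ℝ. Then for all x ∈ ℝ^N and all real numbers s > σ, (1 − 3√3/16)(s−σ) ≤ G_μ(x,s)s − G_μ(x,σ)σ ≤ (1 + 3√3/16)(s−σ). -/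
/-!
The derivative of `s ↦ G_μ(x,s) s` is `1 + t / (1 + t²)²` with `t = μ(x) s`, so by the mean value
inequality it suffices that `|t| / (1 + t²)² ≤ 3√3/16`. Equality holds at `|t| = 1/√3`: bounding
`1 + t²` from below by its tangent line `2/3 (1 + √3 t)` at `1/√3` and applying AM-GM to `1` and
`√3 |t|` loses nothing there.
-/

noncomputable section

/-- The kernel `G_μ(x,s) = 1 + μ(x) s / (2 (1 + μ(x)² s²))`. -/
def Gmu (N : ℕ) (μ : (Fin N → ℝ) → ℝ) (x : Fin N → ℝ) (s : ℝ) : ℝ :=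
  1 + μ x * s / (2 * (1 + μ x ^ 2 * s ^ 2))

theorem two_thirds_mul_one_add_sqrt_three_mul_le (t : ℝ) :
    2 / 3 * (1 + √3 * t) ≤ 1 + t ^ 2 := by
  have sq_sqrt_three : √3 ^ 2 = 3 := Real.sq_sqrt (by norm_num)
  linear_combination sq_nonneg (√3 * t - 1) / 3 + t ^ 2 / 3 * sq_sqrt_three

theorem abs_div_one_add_sq_sq_le (t : ℝ) : |t / (1 + t ^ 2) ^ 2| ≤ 3 * √3 / 16 := by
  have sq_sqrt_three : √3 ^ 2 = 3 := Real.sq_sqrt (by norm_num)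
  rw [abs_div, abs_sq, div_le_iff₀ (by positivity)]
  calc |t| = 3 * √3 / 16 * ((2 / 3) ^ 2 * (4 * 1 * (√3 * |t|))) := by
        linear_combination -|t| / 3 * sq_sqrt_three
    _ ≤ 3 * √3 / 16 * ((2 / 3) ^ 2 * (1 + √3 * |t|) ^ 2) := by
        gcongr
        exact four_mul_le_sq_add 1 (√3 * |t|)
    _ = 3 * √3 / 16 * (2 / 3 * (1 + √3 * |t|)) ^ 2 := by rw [mul_pow]
    _ ≤ 3 * √3 / 16 * (1 + |t| ^ 2) ^ 2 := by
        gcongr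
        exact two_thirds_mul_one_add_sqrt_three_mul_le |t|
    _ = 3 * √3 / 16 * (1 + t ^ 2) ^ 2 := by rw [sq_abs]

section

variable (N : ℕ) (μ : (Fin N → ℝ) → ℝ) (x : Fin N → ℝ)

theorem hasDerivAt_Gmu_mul_self (s : ℝ) :
    HasDerivAt (fun t ↦ Gmu N μ x t * t) (1 + μ x * s / (1 + (μ x * s) ^ 2) ^ 2) s := by
  have denom_ne_zero : 2 * (1 + μ x ^ 2 * s ^ 2) ≠ 0 := by positivity
  have hasDerivAt_num : HasDerivAt (fun t ↦ μ x * t) (μ x) s := by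
    simpa using (hasDerivAt_id s).const_mul (μ x)
  have hasDerivAt_denom :
      HasDerivAt (fun t ↦ 2 * (1 + μ x ^ 2 * t ^ 2)) (2 * (μ x ^ 2 * (2 * s))) s := by
    simpa using (((hasDerivAt_pow 2 s).const_mul (μ x ^ 2)).const_add 1).const_mul 2
  refine (((hasDerivAt_num.fun_div hasDerivAt_denom denom_ne_zero).const_add 1).fun_mul
    (hasDerivAt_id' s)).congr_deriv ?_
  rw [mul_pow]
  field_simp
  ring

theorem differentiable_Gmu_mul_self : Differentiable ℝ fun s ↦ Gmu N μ x s * s :=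
  fun s ↦ (hasDerivAt_Gmu_mul_self N μ x s).differentiableAt

theorem abs_deriv_Gmu_mul_self_sub_one_le (s : ℝ) :
    |deriv (fun t ↦ Gmu N μ x t * t) s - 1| ≤ 3 * √3 / 16 := by
  rw [(hasDerivAt_Gmu_mul_self N μ x s).deriv, add_sub_cancel_left]
  exact abs_div_one_add_sq_sq_le (μ x * s)

theorem Gmu_strong_monotonicity_general {s σ : ℝ} (hs : σ ≤ s) :
    (1 - 3 * √3 / 16) * (s - σ) ≤ Gmu N μ x s * s - Gmu N μ x σ * σ ∧
      Gmu N μ x s * s - Gmu N μ x σ * σ ≤ (1 + 3 * √3 / 16) * (s - σ) := by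
  have deriv_bounds (t : ℝ) := abs_sub_le_iff.mp (abs_deriv_Gmu_mul_self_sub_one_le N μ x t)
  have differentiable := differentiable_Gmu_mul_self N μ x
  exact ⟨mul_sub_le_image_sub_of_le_deriv differentiable
      (fun t ↦ sub_le_comm.mp (deriv_bounds t).2) hs,
    image_sub_le_mul_sub_of_deriv_le differentiable
      (fun t ↦ sub_le_iff_le_add'.mp (deriv_bounds t).1) hs⟩

end

/-- **Strong monotonicity of the prototype kernel `G_μ`**: for every measurable `μ`,
`(1 − 3√3/16)(s−σ) ≤ G_μ(x,s)s − G_μ(x,σ)σ ≤ (1 + 3√3/16)(s−σ)` whenever `s > σ`. -/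
theorem Gmu_strong_monotonicity (N : ℕ) (μ : (Fin N → ℝ) → ℝ) (hμ : Measurable μ)
    (x : Fin N → ℝ) (s σ : ℝ) (hs : σ < s) :
    (1 - 3 * Real.sqrt 3 / 16) * (s - σ) ≤ Gmu N μ x s * s - Gmu N μ x σ * σ ∧
      Gmu N μ x s * s - Gmu N μ x σ * σ ≤ (1 + 3 * Real.sqrt 3 / 16) * (s - σ) :=
  Gmu_strong_monotonicity_general N μ x hs.le
end
end

section
/- Let q > 1 be a real number. Then for all real numbers a, b ≥ 0, (a−b)(a^{q−1} − b^{q−1}) ≥ (4(q−1)/q²)·(a^{q/2} − b^{q/2})². -/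
/-!
For `α > 0` we have `∫ t in b..a, t ^ (α - 1) = (a ^ α - b ^ α) / α`. Since `t ^ ((α + β) / 2 - 1)`
is the geometric mean of `t ^ (α - 1)` and `t ^ (β - 1)`, the Cauchy–Schwarz inequality on the
interval between `a` and `b` compares the exponent `(α + β) / 2` with `α` and `β`; the theorem is
the case `α = 1`, `β = q - 1`.
-/

open MeasureTheory
open scoped Interval

theorem sq_integral_mul_le {X : Type*} [MeasurableSpace X] {μ : Measure X} {f g : X → ℝ}
    (hf : MemLp f 2 μ) (hg : MemLp g 2 μ) :
    (∫ x, f x * g x ∂μ) ^ 2 ≤ (∫ x, f x ^ 2 ∂μ) * ∫ x, g x ^ 2 ∂μ := by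
  have inner_toLp {u v : X → ℝ} (hu : MemLp u 2 μ) (hv : MemLp v 2 μ) :
      inner ℝ (hu.toLp u) (hv.toLp v) = ∫ x, u x * v x ∂μ := by
    rw [L2.inner_def]
    refine integral_congr_ae ?_
    filter_upwards [hu.coeFn_toLp, hv.coeFn_toLp] with x hux hvx
    rw [hux, hvx, real_inner_comm, RCLike.inner_apply, conj_trivial]
  simpa only [inner_toLp, ← sq] using real_inner_mul_inner_self_le (hf.toLp f) (hg.toLp g)

theorem sq_intervalIntegral_mul_le {μ : Measure ℝ} {a b : ℝ} {f g : ℝ → ℝ}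
    (hf : MemLp f 2 (μ.restrict (Ι a b))) (hg : MemLp g 2 (μ.restrict (Ι a b))) :
    (∫ x in a..b, f x * g x ∂μ) ^ 2 ≤ (∫ x in a..b, f x ^ 2 ∂μ) * ∫ x in a..b, g x ^ 2 ∂μ := by
  simp only [intervalIntegral.intervalIntegral_eq_integral_uIoc]
  split_ifs <;> simpa using sq_integral_mul_le hf hg

theorem pos_of_mem_uIoc {a b t : ℝ} (ha : 0 ≤ a) (hb : 0 ≤ b) (ht : t ∈ Ι a b) : 0 < t :=
  (le_min ha hb).trans_lt ht.1

theorem sq_rpow_div_two {t : ℝ} (ht : 0 ≤ t) (r : ℝ) : (t ^ (r / 2)) ^ 2 = t ^ r := by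
  rw [← Real.rpow_mul_natCast ht, Nat.cast_ofNat, div_mul_cancel₀ r two_ne_zero]

theorem memLp_two_rpow_div_two {r a b : ℝ} (hr : -1 < r) (ha : 0 ≤ a) (hb : 0 ≤ b) :
    MemLp (fun t : ℝ ↦ t ^ (r / 2)) 2 (volume.restrict (Ι a b)) := by
  have hmeas : Measurable fun t : ℝ ↦ t ^ (r / 2) := by fun_prop
  have hint : IntegrableOn (fun t : ℝ ↦ t ^ r) (Ι a b) :=
    (intervalIntegral.intervalIntegrable_rpow' hr).def'
  rw [memLp_two_iff_integrable_sq hmeas.aestronglyMeasurable]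
  exact hint.congr_fun
    (fun t ht ↦ (sq_rpow_div_two (pos_of_mem_uIoc ha hb ht).le r).symm) measurableSet_uIoc

theorem integral_rpow_sub_one {α : ℝ} (hα : 0 < α) (a b : ℝ) :
    ∫ t in a..b, t ^ (α - 1) = (b ^ α - a ^ α) / α := by
  rw [integral_rpow (Or.inl (by linarith)), sub_add_cancel]

theorem sq_rpow_sub_rpow_div_le {α β a b : ℝ} (hα : 0 < α) (hβ : 0 < β) (ha : 0 ≤ a)
    (hb : 0 ≤ b) :
    ((a ^ ((α + β) / 2) - b ^ ((α + β) / 2)) / ((α + β) / 2)) ^ 2 ≤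
      (a ^ α - b ^ α) / α * ((a ^ β - b ^ β) / β) := by
  have integral_sq (γ : ℝ) :
      ∫ t in b..a, (t ^ ((γ - 1) / 2)) ^ 2 = ∫ t in b..a, t ^ (γ - 1) :=
    intervalIntegral.integral_congr_ae <| .of_forall fun t ht ↦
      sq_rpow_div_two (pos_of_mem_uIoc hb ha ht).le (γ - 1)
  have integral_mul :
      ∫ t in b..a, t ^ ((α - 1) / 2) * t ^ ((β - 1) / 2) = ∫ t in b..a, t ^ ((α + β) / 2 - 1) := by
    refine intervalIntegral.integral_congr_ae <| .of_forall fun t ht ↦ ?_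
    rw [← Real.rpow_add (pos_of_mem_uIoc hb ha ht)]
    ring_nf
  calc ((a ^ ((α + β) / 2) - b ^ ((α + β) / 2)) / ((α + β) / 2)) ^ 2
      = (∫ t in b..a, t ^ ((α - 1) / 2) * t ^ ((β - 1) / 2)) ^ 2 := by
        rw [integral_mul, integral_rpow_sub_one (by positivity)]
    _ ≤ (∫ t in b..a, (t ^ ((α - 1) / 2)) ^ 2) * ∫ t in b..a, (t ^ ((β - 1) / 2)) ^ 2 :=
        sq_intervalIntegral_mul_le (memLp_two_rpow_div_two (by linarith) hb ha)
          (memLp_two_rpow_div_two (by linarith) hb ha)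
    _ = (a ^ α - b ^ α) / α * ((a ^ β - b ^ β) / β) := by
        rw [integral_sq, integral_sq, integral_rpow_sub_one hα, integral_rpow_sub_one hβ]

/-- **Elementary power inequality**: for `q > 1` and `a, b ≥ 0`,
`(a−b)(a^{q−1} − b^{q−1}) ≥ (4(q−1)/q²)(a^{q/2} − b^{q/2})²`. -/
theorem power_difference_inequality (q : ℝ) (hq : 1 < q) (a b : ℝ)
    (ha : 0 ≤ a) (hb : 0 ≤ b) :
    (4 * (q - 1) / q ^ 2) * (a ^ (q / 2) - b ^ (q / 2)) ^ 2 ≤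
      (a - b) * (a ^ (q - 1) - b ^ (q - 1)) := by
  have hq₁ : 0 < q - 1 := sub_pos.2 hq
  have key : ((a ^ (q / 2) - b ^ (q / 2)) / (q / 2)) ^ 2 ≤
      (a - b) * ((a ^ (q - 1) - b ^ (q - 1)) / (q - 1)) := by
    simpa only [add_sub_cancel, Real.rpow_one, div_one] using
      sq_rpow_sub_rpow_div_le one_pos hq₁ ha hb
  calc (4 * (q - 1) / q ^ 2) * (a ^ (q / 2) - b ^ (q / 2)) ^ 2
      = (q - 1) * ((a ^ (q / 2) - b ^ (q / 2)) / (q / 2)) ^ 2 := by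
        field_simp
        norm_num
    _ ≤ (q - 1) * ((a - b) * ((a ^ (q - 1) - b ^ (q - 1)) / (q - 1))) := by gcongr
    _ = (a - b) * (a ^ (q - 1) - b ^ (q - 1)) := by field_simp
end
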